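/- A bug-specific soft-reset QED test fails: suppose the processor is single-instruction correct with respect to F and i_r is a soft-reset instruction. Let i_1, …, i_k be original instructions (k ≥ 2), let t = ⟨i_1, …, i_k, i_r, D(i_1), i_r, D(i_2), …, i_r, D(i_k)⟩ (so t has length 3k with t_{k+2j−1} = i_r and t_{k+2j} = D(i_j) for 1 ≤ j ≤ k), let s_0 be a QED-consistent initial state, and let s_1, …, s_{3k} be the path from s_0 via t. Suppose F(s_{j−1}, i_j, s_j) for every 1 ≤ j ≤ k−1, that ¬F(s_{k−1}, i_k, s_k), and that s_{k−1}(l) = s_k(l) for every duplicate location l ∈ L_D (the buggy instruction does not corrupt any duplicate location). Then s_{3k} is not QED-consistent, i.e., the test fails. -/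

import Mathlib

/-!
A soft reset followed by the duplicate `D(i_j)` acts as one step obeying the specification, so the
second half of the test replays the original program on the duplicate locations, which still hold
their initial values, and leaves the original locations alone. Just before `D(i_k)` the duplicate
locations therefore mirror the original locations of `s_{k-1}`. If the final state were
QED-consistent, the duplicate locations after `D(i_k)` would likewise mirror the original locations
of `s_k`. The specified step `D(i_k)` would then pull back along `c` to show that step `k` obeys the
specification, contrary to assumption.
-/

/-- An instruction: an opcode, an output location and two input locations. -/
structure Instr (L Op : Type*) where
  op : Op
  out : L
  in1 : L
  in2 : L

/-- A state: an architectural part `L → V` and a non-architectural part `NS`. -/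
abbrev PState (V L NS : Type*) := (L → V) × NS

/-- The abstract specification relation `F` induced by the family `f` of opcode
specification functions: all non-output locations are preserved and the output
location gets the value specified by the opcode's specification function. -/
def AbsSpec {V L NS Op : Type*} (f : Op → V → V → V)
    (s : PState V L NS) (i : Instr L Op) (s' : PState V L NS) : Prop :=
  (∀ l, l ≠ i.out → s.1 l = s'.1 l) ∧
    s'.1 i.out = f i.op (s.1 i.in1) (s.1 i.in2)

/-- An original instruction: all its locations lie in the set `O` of original locations. -/
def IsOrig {L Op : Type*} (O : Set L) (i : Instr L Op) : Prop :=
  i.out ∈ O ∧ i.in1 ∈ O ∧ i.in2 ∈ O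

/-- A duplicate instruction: all its locations lie in the set `DL` of duplicate locations. -/
def IsDup {L Op : Type*} (DL : Set L) (i : Instr L Op) : Prop :=
  i.out ∈ DL ∧ i.in1 ∈ DL ∧ i.in2 ∈ DL

/-- The instruction duplication function `D` w.r.t. the location correspondence `c`. -/
def dupI {L Op : Type*} (c : L → L) (i : Instr L Op) : Instr L Op :=
  ⟨i.op, c i.out, c i.in1, c i.in2⟩

/-- QED-consistency of a state: every original location holds the same value as
its corresponding duplicate location. -/
def QedCons {V L NS : Type*} (O : Set L) (c : L → L) (s : PState V L NS) : Prop :=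
  ∀ l ∈ O, s.1 l = s.1 (c l)

section

open Set

variable {V L NS NS' Op : Type*} {f : Op → V → V → V} {O : Set L} {c : L → L}

theorem AbsSpec.eqOn {S : Set L} {i : Instr L Op} {s s' : PState V L NS}
    (h : AbsSpec f s i s') (hi : i.out ∉ S) : EqOn s'.1 s.1 S :=
  fun l hl => (h.1 l (ne_of_mem_of_not_mem hl hi)).symm

theorem eqOn_of_forall_absSpec {S : Set L} {i : ℕ → Instr L Op} {s : ℕ → PState V L NS} {n : ℕ}
    (hs : ∀ j < n, AbsSpec f (s j) (i j) (s (j + 1))) (hi : ∀ j < n, (i j).out ∉ S) :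
    EqOn (s n).1 (s 0).1 S := by
  induction n with
  | zero => exact eqOn_refl _ _
  | succ n ih =>
    have hstep : EqOn (s (n + 1)).1 (s n).1 S :=
      (hs n n.lt_succ_self).eqOn (hi n n.lt_succ_self)
    exact hstep.trans (ih (fun j hj => hs j (by lia)) (fun j hj => hi j (by lia)))

theorem IsOrig.isDup_dupI {DL : Set L} {i : Instr L Op} (hi : IsOrig O i) (hc : MapsTo c O DL) :
    IsDup DL (dupI c i) :=
  ⟨hc hi.1, hc hi.2.1, hc hi.2.2⟩

theorem AbsSpec.eqOn_comp_of_dupI (hinj : InjOn c O) {i : Instr L Op} (hi : IsOrig O i)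
    {s s' : PState V L NS} {t t' : PState V L NS'}
    (hs : AbsSpec f s i s') (ht : AbsSpec f t (dupI c i) t')
    (h : EqOn s.1 (t.1 ∘ c) O) : EqOn s'.1 (t'.1 ∘ c) O := by
  obtain ⟨hout, hin1, hin2⟩ := hi
  intro l hl
  by_cases hlo : l = i.out
  · subst hlo
    calc s'.1 i.out
        = f i.op (s.1 i.in1) (s.1 i.in2) := hs.2
      _ = f i.op (t.1 (c i.in1)) (t.1 (c i.in2)) := congrArg₂ (f i.op) (h hin1) (h hin2)
      _ = t'.1 (c i.out) := ht.2.symm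
  · calc s'.1 l
        = s.1 l := (hs.1 l hlo).symm
      _ = t.1 (c l) := h hl
      _ = t'.1 (c l) := ht.1 (c l) (hinj.ne hl hout hlo)

theorem eqOn_comp_of_forall_absSpec_dupI (hinj : InjOn c O) {i : ℕ → Instr L Op}
    {s : ℕ → PState V L NS} {t : ℕ → PState V L NS'} {n : ℕ} (hi : ∀ j < n, IsOrig O (i j))
    (hs : ∀ j < n, AbsSpec f (s j) (i j) (s (j + 1)))
    (ht : ∀ j < n, AbsSpec f (t j) (dupI c (i j)) (t (j + 1)))
    (h0 : EqOn (s 0).1 ((t 0).1 ∘ c) O) : EqOn (s n).1 ((t n).1 ∘ c) O := by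
  induction n with
  | zero => exact h0
  | succ n ih =>
    exact (hs n n.lt_succ_self).eqOn_comp_of_dupI hinj (hi n n.lt_succ_self) (ht n n.lt_succ_self)
      (ih (fun j hj => hi j (by lia)) (fun j hj => hs j (by lia)) (fun j hj => ht j (by lia)))

theorem AbsSpec.of_dupI (hinj : InjOn c O) {i : Instr L Op} (hi : IsOrig O i)
    {s s' : PState V L NS} {t t' : PState V L NS'} (ht : AbsSpec f t (dupI c i) t')
    (h : EqOn s.1 (t.1 ∘ c) O) (h' : EqOn s'.1 (t'.1 ∘ c) O) (hframe : EqOn s'.1 s.1 Oᶜ) :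
    AbsSpec f s i s' := by
  obtain ⟨hout, hin1, hin2⟩ := hi
  refine ⟨fun l hlo => ?_, ?_⟩
  · by_cases hl : l ∈ O
    · calc s.1 l
          = t.1 (c l) := h hl
        _ = t'.1 (c l) := ht.1 (c l) (hinj.ne hl hout hlo)
        _ = s'.1 l := (h' hl).symm
    · exact (hframe hl).symm
  · calc s'.1 i.out
        = t'.1 (c i.out) := h' hout
      _ = f i.op (t.1 (c i.in1)) (t.1 (c i.in2)) := ht.2
      _ = f i.op (s.1 i.in1) (s.1 i.in2) := (congrArg₂ (f i.op) (h hin1) (h hin2)).symm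

theorem absSpec_of_replay_of_qedCons (hinj : InjOn c O) (hmaps : MapsTo c O Oᶜ)
    {i : ℕ → Instr L Op} {s : ℕ → PState V L NS} {t : ℕ → PState V L NS'} {n : ℕ}
    (hi : ∀ j ≤ n, IsOrig O (i j))
    (hs : ∀ j < n, AbsSpec f (s j) (i j) (s (j + 1))) (hframe : EqOn (s (n + 1)).1 (s n).1 Oᶜ)
    (ht : ∀ j ≤ n, AbsSpec f (t j) (dupI c (i j)) (t (j + 1))) (hst : (t 0).1 = (s (n + 1)).1)
    (hqed0 : QedCons O c (s 0)) (hqed : QedCons O c (t (n + 1))) :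
    AbsSpec f (s n) (i n) (s (n + 1)) := by
  have hdup : EqOn (s (n + 1)).1 (s 0).1 Oᶜ :=
    hframe.trans (eqOn_of_forall_absSpec hs fun j hj => notMem_compl_iff.2 (hi j hj.le).1)
  have hstart : EqOn (s 0).1 ((t 0).1 ∘ c) O := fun l hl =>
    calc (s 0).1 l
        = (s 0).1 (c l) := hqed0 l hl
      _ = (s (n + 1)).1 (c l) := (hdup (hmaps hl)).symm
      _ = (t 0).1 (c l) := congrFun hst.symm (c l)
  have hbefore : EqOn (s n).1 ((t n).1 ∘ c) O :=
    eqOn_comp_of_forall_absSpec_dupI hinj (fun j hj => hi j hj.le) hs (fun j hj => ht j hj.le)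
      hstart
  have horig : EqOn (t (n + 1)).1 (t 0).1 O :=
    eqOn_of_forall_absSpec (fun j hj => ht j (by lia)) fun j hj => hmaps (hi j (by lia)).1
  have hafter : EqOn (s (n + 1)).1 ((t (n + 1)).1 ∘ c) O := fun l hl =>
    calc (s (n + 1)).1 l
        = (t 0).1 l := congrFun hst.symm l
      _ = (t (n + 1)).1 l := (horig hl).symm
      _ = (t (n + 1)).1 (c l) := hqed l hl
  exact (ht n le_rfl).of_dupI hinj (hi n le_rfl) hbefore hafter hframe

theorem absSpec_softReset {δ : PState V L NS → Instr L Op → PState V L NS} {σ0 : NS}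
    {ir i : Instr L Op} (hreset : ∀ s : PState V L NS, δ s ir = (s.1, σ0))
    (hSI : ∀ s : PState V L NS, s.2 = σ0 → AbsSpec f s i (δ s i)) (s : PState V L NS) :
    AbsSpec f s i (δ (δ s ir) i) := by
  rw [hreset]
  exact hSI (s.1, σ0) rfl

theorem stmt13_general (δ : PState V L NS → Instr L Op → PState V L NS) (σ0 : NS)
    (hmaps : MapsTo c O Oᶜ) (hinj : InjOn c O)
    (ir : Instr L Op) (hreset : ∀ s : PState V L NS, δ s ir = (s.1, σ0))
    (hSI : ∀ i, IsDup Oᶜ i → ∀ s : PState V L NS, s.2 = σ0 → AbsSpec f s i (δ s i))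
    (k : ℕ) (hk : 0 < k)
    (ins : ℕ → Instr L Op) (horig : ∀ j < k, IsOrig O (ins j))
    (st : ℕ → PState V L NS) (hqed0 : QedCons O c (st 0))
    (hpath_reset : ∀ j < k, st (k + 2 * j + 1) = δ (st (k + 2 * j)) ir)
    (hpath_dup : ∀ j < k, st (k + 2 * j + 2) = δ (st (k + 2 * j + 1)) (dupI c (ins j)))
    (hF : ∀ j < k - 1, AbsSpec f (st j) (ins j) (st (j + 1)))
    (hbug : ¬ AbsSpec f (st (k - 1)) (ins (k - 1)) (st k))
    (hnocorrupt : EqOn (st k).1 (st (k - 1)).1 Oᶜ) :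
    ¬ QedCons O c (st (3 * k)) := by
  intro hqed
  have hreplay : ∀ j < k,
      AbsSpec f (st (k + 2 * j)) (dupI c (ins j)) (st (k + 2 * (j + 1))) := by
    intro j hj
    rw [show k + 2 * (j + 1) = k + 2 * j + 2 by ring, hpath_dup j hj, hpath_reset j hj]
    exact absSpec_softReset hreset (hSI _ ((horig j hj).isDup_dupI hmaps)) _
  rw [show 3 * k = k + 2 * k by ring] at hqed
  obtain ⟨n, rfl⟩ := Nat.exists_eq_add_one.2 hk
  exact hbug (absSpec_of_replay_of_qedCons (t := fun j => st (n + 1 + 2 * j)) hinj hmaps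
    (fun j hj => horig j (by lia)) hF hnocorrupt (fun j hj => hreplay j (by lia)) rfl hqed0 hqed)

end

/-- A bug-specific soft-reset QED test fails: in a single-instruction correct
processor, executing `⟨i_1, …, i_k, i_r, D(i_1), i_r, D(i_2), …, i_r, D(i_k)⟩`
from a QED-consistent initial state, where steps `1, …, k−1` execute according to
the specification, step `k` violates it without corrupting any duplicate location,
yields a final state that is not QED-consistent. -/
theorem stmt13 {V L NS Op : Type*} (f : Op → V → V → V)
    (δ : PState V L NS → Instr L Op → PState V L NS) (σ0 : NS)
    (O DL : Set L) (c : L → L)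
    (hpart : ∀ l : L, l ∈ O ↔ l ∉ DL) (hbij : Set.BijOn c O DL)
    (ir : Instr L Op) (hreset : ∀ s : PState V L NS, δ s ir = (s.1, σ0))
    (hSI : ∀ (i : Instr L Op) (s : PState V L NS), s.2 = σ0 → AbsSpec f s i (δ s i))
    (k : ℕ) (hk : 2 ≤ k)
    (ins : ℕ → Instr L Op) (horig : ∀ j < k, IsOrig O (ins j))
    (st : ℕ → PState V L NS)
    (hinit : (st 0).2 = σ0) (hqed0 : QedCons O c (st 0))
    (hpath1 : ∀ j < k, st (j + 1) = δ (st j) (ins j))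
    (hpath2 : ∀ j < k, st (k + 2 * j + 1) = δ (st (k + 2 * j)) ir)
    (hpath3 : ∀ j < k, st (k + 2 * j + 2) = δ (st (k + 2 * j + 1)) (dupI c (ins j)))
    (hF : ∀ j < k - 1, AbsSpec f (st j) (ins j) (st (j + 1)))
    (hbug : ¬ AbsSpec f (st (k - 1)) (ins (k - 1)) (st k))
    (hnocorrupt : ∀ l ∈ DL, (st (k - 1)).1 l = (st k).1 l) :
    ¬ QedCons O c (st (3 * k)) := by
  obtain rfl : DL = Oᶜ := Set.ext fun l => by simp [hpart l]
  exact stmt13_general δ σ0 hbij.mapsTo hbij.injOn ir hreset (fun i _ => hSI i) k (by lia) ins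
    horig st hqed0 hpath2 hpath3 hF hbug fun l hl => (hnocorrupt l hl).symm
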